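/- Let (G, G⁺, Δ) be a support-preserving LCM-Garside structure satisfying homogeneity and square-freeness, and such that for every saturated X ⊆ 𝒜 some positive power of Δ_X is central in G_X. Then for any two parabolic subgroups B₁ and B₂ of G, the intersection B₁ ∩ B₂ is again a parabolic subgroup of G. -/

import Mathlib

open scoped Pointwise Classical

/-- A Garside structure on a group `G`: a submonoid `pos` of positive elements with
trivial units, prefix and suffix lattice operations, and a Garside element `delta`. -/
structure GarsideStructure (G : Type*) [Group G] where
  /-- the submonoid of positive elements -/
  pos : Submonoid G
  /-- the Garside element Δ -/
  delta : G
  /-- meet for the prefix order -/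
  meet : G → G → G
  /-- join for the prefix order -/
  join : G → G → G
  /-- meet for the suffix order -/
  rmeet : G → G → G
  /-- join for the suffix order -/
  rjoin : G → G → G
  units_triv : ∀ a : G, a ∈ pos → a⁻¹ ∈ pos → a = 1
  meet_le_left : ∀ a b : G, (meet a b)⁻¹ * a ∈ pos
  meet_le_right : ∀ a b : G, (meet a b)⁻¹ * b ∈ pos
  le_meet : ∀ a b c : G, c⁻¹ * a ∈ pos → c⁻¹ * b ∈ pos → c⁻¹ * meet a b ∈ pos
  le_join_left : ∀ a b : G, a⁻¹ * join a b ∈ pos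
  le_join_right : ∀ a b : G, b⁻¹ * join a b ∈ pos
  join_le : ∀ a b c : G, a⁻¹ * c ∈ pos → b⁻¹ * c ∈ pos → (join a b)⁻¹ * c ∈ pos
  rmeet_le_left : ∀ a b : G, a * (rmeet a b)⁻¹ ∈ pos
  rmeet_le_right : ∀ a b : G, b * (rmeet a b)⁻¹ ∈ pos
  le_rmeet : ∀ a b c : G, a * c⁻¹ ∈ pos → b * c⁻¹ ∈ pos → rmeet a b * c⁻¹ ∈ pos
  rjoin_le_left : ∀ a b : G, rjoin a b * a⁻¹ ∈ pos
  rjoin_le_right : ∀ a b : G, rjoin a b * b⁻¹ ∈ pos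
  rjoin_le : ∀ a b c : G, c * a⁻¹ ∈ pos → c * b⁻¹ ∈ pos → c * (rjoin a b)⁻¹ ∈ pos
  delta_pos : delta ∈ pos
  /-- Δ is balanced: its positive prefixes coincide with its positive suffixes -/
  delta_balanced : ∀ s : G, s ∈ pos → (s⁻¹ * delta ∈ pos ↔ delta * s⁻¹ ∈ pos)
  /-- the set of simple elements (divisors of Δ) is finite -/
  divDelta_finite : {s : G | s ∈ pos ∧ s⁻¹ * delta ∈ pos}.Finite
  /-- the simple elements generate `G` -/
  divDelta_generates : Subgroup.closure {s : G | s ∈ pos ∧ s⁻¹ * delta ∈ pos} = ⊤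
  /-- the atoms generate the positive monoid -/
  atoms_generate :
    Submonoid.closure {a : G | a ∈ pos ∧ a ≠ 1 ∧
      ∀ b ∈ pos, b⁻¹ * a ∈ pos → b = 1 ∨ b = a} = pos
  /-- every atom divides Δ -/
  atoms_divide_delta : ∀ a : G, a ∈ pos → a ≠ 1 →
    (∀ b ∈ pos, b⁻¹ * a ∈ pos → b = 1 ∨ b = a) → a⁻¹ * delta ∈ pos
  /-- every element is bounded below and above by powers of Δ -/
  delta_bounds : ∀ x : G, ∃ p q : ℤ, p ≤ q ∧ (delta ^ p)⁻¹ * x ∈ pos ∧ x⁻¹ * delta ^ q ∈ pos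
  /-- conjugation by Δ maps the positive monoid bijectively onto itself -/
  conj_delta : ∀ a : G, a ∈ pos ↔ delta * a * delta⁻¹ ∈ pos
  /-- some positive power of Δ is central -/
  central_power : ∃ n : ℕ, 0 < n ∧ delta ^ n ∈ Subgroup.center G
  /-- no infinite strictly decreasing (for the prefix order) sequence of positive elements -/
  no_infinite_descent : ¬ ∃ f : ℕ → G, (∀ n, f n ∈ pos) ∧
    ∀ n, (f (n + 1))⁻¹ * f n ∈ pos ∧ f (n + 1) ≠ f n

namespace GarsideStructure

variable {G : Type*} [Group G] (S : GarsideStructure G)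

/-- the prefix order: `a ≼ b` iff `a⁻¹ * b` is positive -/
def le (a b : G) : Prop := a⁻¹ * b ∈ S.pos

/-- the set of positive prefixes of an element -/
def Div (d : G) : Set G := {s : G | s ∈ S.pos ∧ S.le s d}

/-- atoms: nontrivial positive elements with no nontrivial proper positive prefix -/
def IsAtomic (a : G) : Prop :=
  a ∈ S.pos ∧ a ≠ 1 ∧ ∀ b ∈ S.pos, S.le b a → b = 1 ∨ b = a

/-- the set of atoms -/
def atoms : Set G := {a : G | S.IsAtomic a}

/-- the left denominator of `x`: `D_L x = (1 ∧ x)⁻¹` -/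
def DL (x : G) : G := (S.meet 1 x)⁻¹

/-- the left numerator of `x`: `N_L x = D_L x * x` -/
def NL (x : G) : G := S.DL x * x

/-- the (left) swap `φ(x) = N_L x * (D_L x)⁻¹ = D_L x * x * (D_L x)⁻¹` -/
def swap (x : G) : G := S.DL x * x * (S.DL x)⁻¹

/-- an element is recurrent if it is fixed by some positive iterate of the swap map -/
def Recurrent (x : G) : Prop := ∃ m : ℕ, 0 < m ∧ S.swap^[m] x = x

/-- the set `R(x)` of recurrent conjugates of `x` -/
def Rset (x : G) : Set G := {y : G | IsConj x y ∧ S.Recurrent y}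

/-- the set `C⁺(x)` of positive conjugates of `x` -/
def Cpos (x : G) : Set G := {y : G | IsConj x y ∧ y ∈ S.pos}

/-- the set `C⁻(x)` of negative conjugates of `x` -/
def Cneg (x : G) : Set G := {y : G | IsConj x y ∧ y⁻¹ ∈ S.pos}

/-- the transport of `u` at `y`: with `y = a⁻¹ b` reduced, `u^{(1)} = (a u) ∧ (b u)` -/
def transport (y u : G) : G := S.meet (S.DL y * u) (S.NL y * u)

/-- `Δ_X`: the least upper bound for the prefix order of a set `X` (`1` if there is none) -/
noncomputable def deltaOf (X : Set G) : G :=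
  if h : ∃ d : G, (∀ x ∈ X, S.le x d) ∧ ∀ c : G, (∀ x ∈ X, S.le x c) → S.le d c
  then h.choose else 1

/-- the closure `X̄ = Div(Δ_X) ∩ 𝒜` of a set of atoms -/
noncomputable def closureOf (X : Set G) : Set G := S.Div (S.deltaOf X) ∩ S.atoms

/-- the subgroup `G_X` generated by the closure of `X` -/
noncomputable def GX (X : Set G) : Subgroup G := Subgroup.closure (S.closureOf X)

/-- the support of an element: the closure of the set of atoms appearing in atom
factorizations of its left denominator and left numerator -/
noncomputable def supp (x : G) : Set G :=
  if h : ∃ p : List G × List G,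
      (∀ a ∈ p.1, a ∈ S.atoms) ∧ (∀ a ∈ p.2, a ∈ S.atoms) ∧
      p.1.prod = S.DL x ∧ p.2.prod = S.NL x
  then S.closureOf ({a : G | a ∈ h.choose.1} ∪ {a : G | a ∈ h.choose.2})
  else ∅

/-- an LCM-Garside structure -/
structure IsLCM : Prop where
  delta_eq : S.delta = S.deltaOf S.atoms
  balanced : ∀ X ⊆ S.atoms, ∀ s ∈ S.pos,
    (S.le s (S.deltaOf X) ↔ S.deltaOf X * s⁻¹ ∈ S.pos)
  div_eq : ∀ X ⊆ S.atoms,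
    S.Div (S.deltaOf X) = S.Div S.delta ∩ {g : G | g ∈ S.GX X ∧ g ∈ S.pos}
  factor_closed : ∀ X ⊆ S.atoms, ∀ g : G, g ∈ S.GX X → g ∈ S.pos →
    ∀ a b : G, a ∈ S.pos → b ∈ S.pos → g = a * b → a ∈ S.GX X ∧ b ∈ S.GX X
  lattice_closed : ∀ X ⊆ S.atoms, ∀ a b : G, a ∈ S.GX X → b ∈ S.GX X →
    S.meet a b ∈ S.GX X ∧ S.join a b ∈ S.GX X
  fraction_closed : ∀ X ⊆ S.atoms, ∀ g : G, g ∈ S.GX X →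
    S.DL g ∈ S.GX X ∧ S.NL g ∈ S.GX X

/-- a standard parabolic subgroup: the subgroup generated by a saturated set of atoms -/
noncomputable def IsStandardParabolic (H : Subgroup G) : Prop :=
  ∃ X : Set G, X ⊆ S.atoms ∧ S.closureOf X = X ∧ H = S.GX X

/-- a parabolic subgroup: a conjugate of a standard parabolic subgroup -/
noncomputable def IsParabolic (H : Subgroup G) : Prop :=
  ∃ (P : Subgroup G) (c : G), S.IsStandardParabolic P ∧
    H = Subgroup.map (MulAut.conj c).toMonoidHom P

/-- the structure is support-preserving if conjugations between positive elements
conjugate the corresponding parabolic subgroups of the supports -/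
noncomputable def SupportPreserving : Prop :=
  ∀ y ∈ S.pos, ∀ z ∈ S.pos, ∀ α : G, α⁻¹ * y * α = z →
    Subgroup.map (MulAut.conj α⁻¹).toMonoidHom (S.GX (S.supp y)) = S.GX (S.supp z)

/-- `P` is the parabolic closure of `x` -/
noncomputable def IsParabolicClosure (x : G) (P : Subgroup G) : Prop :=
  S.IsParabolic P ∧ x ∈ P ∧ ∀ H : Subgroup G, S.IsParabolic H → x ∈ H → P ≤ H

end GarsideStructure

/-!
An element `x` of two parabolic subgroups can be conjugated, by iterated swaps inside each of them,
to recurrent elements `y` and `z`. A conjugator from `z` to `y` also intertwines suitable products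
of the denominators met along their swap orbits, since the successive transports of the conjugator
stay in a finite set. Those products are positive, and remain so after right multiplication by `y`
or `z`, so the preservation of supports yields a parabolic subgroup which contains `x` and lies in
both given ones.

Among the parabolic subgroups inside the intersection `B`, choose one with Garside element of
maximal length; after a conjugation it is a standard `G_Z`. For `w ∈ B` and `m` large, the element
`w Δ_Z ^ m` is long enough to be conjugate to a positive element inside a parabolic subgroup of `B`,
and by the swap map the conjugator can be taken in a finite set independent of `m`. Hence, for two
exponents `m < n`, both `w Δ_Z ^ m` and `Δ_Z ^ (n - m)` lie in a common parabolic subgroup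
`α G_U α⁻¹` of `B`. Comparing the growth of the lengths of powers of `Δ_Z` and `Δ_U`, maximality
forces `α G_U α⁻¹ ≤ G_Z`, and therefore `w ∈ G_Z`.
-/

namespace GarsideStructure

section PrefixOrder

variable {G : Type*} [Group G] {S : GarsideStructure G} {a b c x : G}

theorem le.antisymm (h : S.le a b) (h' : S.le b a) : a = b :=
  inv_mul_eq_one.mp (S.units_triv _ h (by simpa [le] using h'))

theorem le.trans (h : S.le a b) (h' : S.le b c) : S.le a c := by
  simpa [le, mul_assoc] using S.pos.mul_mem h h'

variable (S) in
protected theorem one_le_iff : S.le 1 a ↔ a ∈ S.pos := by simp [le]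

variable (S) in
protected theorem mul_le_mul_left_iff (c : G) : S.le (c * a) (c * b) ↔ S.le a b := by
  simp [le, mul_assoc]

variable (S) in
theorem mul_meet (c a b : G) : c * S.meet a b = S.meet (c * a) (c * b) := by
  refine le.antisymm (S.le_meet _ _ _ ?_ ?_) ?_
  · simpa [mul_assoc] using S.meet_le_left a b
  · simpa [mul_assoc] using S.meet_le_right a b
  · rw [← S.mul_le_mul_left_iff c⁻¹, inv_mul_cancel_left]
    exact S.le_meet _ _ _ (by simpa [mul_assoc] using S.meet_le_left (c * a) (c * b))
      (by simpa [mul_assoc] using S.meet_le_right (c * a) (c * b))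

theorem meet_mem_pos (ha : a ∈ S.pos) (hb : b ∈ S.pos) : S.meet a b ∈ S.pos :=
  S.one_le_iff.mp (S.le_meet a b 1 (S.one_le_iff.mpr ha) (S.one_le_iff.mpr hb))

variable (S) in
theorem DL_mem_pos (x : G) : S.DL x ∈ S.pos := by simpa [DL] using S.meet_le_left 1 x

variable (S) in
theorem NL_mem_pos (x : G) : S.NL x ∈ S.pos := S.meet_le_right 1 x

theorem DL_eq_one_iff : S.DL x = 1 ↔ x ∈ S.pos := by
  refine ⟨fun h => by simpa [NL, h] using S.NL_mem_pos x, fun hx => inv_eq_one.mpr ?_⟩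
  exact le.antisymm (S.meet_le_left 1 x) (S.le_meet 1 x 1 (by simp) (S.one_le_iff.mpr hx))

theorem NL_of_pos (hx : x ∈ S.pos) : S.NL x = x := by simp [NL, DL_eq_one_iff.mpr hx]

variable (S) in
theorem inv_NL_eq_meet (x : G) : (S.NL x)⁻¹ = S.meet x⁻¹ 1 := by
  simpa [NL, DL] using S.mul_meet x⁻¹ 1 x

end PrefixOrder

section Delta

variable {G : Type*} [Group G] {S : GarsideStructure G} {p q : ℕ} {g h x : G}

variable (S) in
theorem delta_pow_mem_pos (n : ℕ) : S.delta ^ n ∈ S.pos := S.pos.pow_mem S.delta_pos n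

variable (S) in
theorem conj_delta_pow_mem_pos_iff (n : ℕ) (g : G) :
    S.delta ^ n * g * (S.delta ^ n)⁻¹ ∈ S.pos ↔ g ∈ S.pos := by
  induction n with
  | zero => simp
  | succ n ih =>
    rw [← ih, S.conj_delta (S.delta ^ n * g * (S.delta ^ n)⁻¹), pow_succ']
    simp [mul_assoc]

variable (S) in
theorem delta_pow_mul_mem_pos_iff (n : ℕ) (g : G) :
    S.delta ^ n * g ∈ S.pos ↔ g * S.delta ^ n ∈ S.pos := by
  rw [← S.conj_delta_pow_mem_pos_iff n (g * S.delta ^ n)]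
  simp [mul_assoc]

variable (S) in
/-- `g` is bounded below by `Δ ^ (-p)` for the prefix order. -/
def BoundedBelow (p : ℕ) (g : G) : Prop := S.delta ^ p * g ∈ S.pos

variable (S) in
theorem boundedBelow_iff_inv_le : S.BoundedBelow p g ↔ S.le (S.delta ^ p)⁻¹ g := by
  rw [BoundedBelow, le, inv_inv]

variable (S) in
theorem boundedBelow_inv_iff_le : S.BoundedBelow p g⁻¹ ↔ S.le g (S.delta ^ p) :=
  S.delta_pow_mul_mem_pos_iff p g⁻¹

variable (S) in
theorem boundedBelow_zero_iff : S.BoundedBelow 0 g ↔ g ∈ S.pos := by simp [BoundedBelow]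

namespace BoundedBelow

theorem mul (hg : S.BoundedBelow p g) (hh : S.BoundedBelow q h) :
    S.BoundedBelow (p + q) (g * h) := by
  have := S.pos.mul_mem ((S.conj_delta_pow_mem_pos_iff q _).mpr hg) hh
  rw [BoundedBelow, add_comm, pow_add]
  simpa [mul_assoc] using this

theorem mul_pos (hg : S.BoundedBelow p g) (hh : h ∈ S.pos) : S.BoundedBelow p (g * h) :=
  hg.mul (S.boundedBelow_zero_iff.mpr hh)

theorem pos_mul (hg : S.BoundedBelow p g) (hh : h ∈ S.pos) : S.BoundedBelow p (h * g) := by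
  simpa using (S.boundedBelow_zero_iff.mpr hh).mul hg

theorem mono (hg : S.BoundedBelow p g) (hpq : p ≤ q) : S.BoundedBelow q g := by
  obtain ⟨r, rfl⟩ := Nat.exists_eq_add_of_le' hpq
  rw [BoundedBelow, pow_add, mul_assoc]
  exact S.pos.mul_mem (S.delta_pow_mem_pos r) hg

theorem of_pos (hg : g ∈ S.pos) : S.BoundedBelow p g :=
  (S.boundedBelow_zero_iff.mpr hg).mono p.zero_le

theorem pow (hg : S.BoundedBelow p g) (n : ℕ) : S.BoundedBelow (n * p) (g ^ n) := by
  induction n with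
  | zero => simp [BoundedBelow, S.pos.one_mem]
  | succ n ih => rw [pow_succ, Nat.succ_mul]; exact ih.mul hg

theorem inv_DL (hx : S.BoundedBelow p x) : S.BoundedBelow p (S.DL x)⁻¹ := by
  rw [S.boundedBelow_iff_inv_le] at hx ⊢
  rw [DL, inv_inv]
  exact S.le_meet _ _ _ (by simpa using S.delta_pow_mem_pos p) hx

theorem inv_NL (hx : S.BoundedBelow p x⁻¹) : S.BoundedBelow p (S.NL x)⁻¹ := by
  rw [S.boundedBelow_iff_inv_le] at hx ⊢
  rw [S.inv_NL_eq_meet]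
  exact S.le_meet _ _ _ hx (by simpa using S.delta_pow_mem_pos p)

theorem swap (hx : S.BoundedBelow p x) : S.BoundedBelow p (S.swap x) :=
  hx.inv_DL.pos_mul (S.NL_mem_pos x)

theorem inv_swap (hx : S.BoundedBelow p x⁻¹) : S.BoundedBelow p (S.swap x)⁻¹ := by
  rw [show S.swap x = S.NL x * (S.DL x)⁻¹ from rfl, mul_inv_rev, inv_inv]
  exact hx.inv_NL.pos_mul (S.DL_mem_pos x)

theorem iterate_swap (hx : S.BoundedBelow p x) (n : ℕ) : S.BoundedBelow p (S.swap^[n] x) :=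
  Function.Iterate.rec (S.BoundedBelow p) hx (fun _ h => BoundedBelow.swap h) n

theorem inv_iterate_swap (hx : S.BoundedBelow p x⁻¹) (n : ℕ) :
    S.BoundedBelow p (S.swap^[n] x)⁻¹ :=
  Function.Iterate.rec (fun y => S.BoundedBelow p y⁻¹) hx (fun _ h => inv_swap h) n

end BoundedBelow

variable (S)

theorem exists_boundedBelow (g : G) : ∃ p, S.BoundedBelow p g := by
  obtain ⟨p, -, -, hp, -⟩ := S.delta_bounds g
  obtain ⟨k, hk⟩ := Int.eq_ofNat_of_zero_le (show 0 ≤ (p.natAbs : ℤ) + p by omega)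
  have h := S.pos.mul_mem (S.delta_pow_mem_pos k) hp
  rw [← zpow_natCast, ← hk, zpow_add, zpow_natCast] at h
  exact ⟨p.natAbs, by simpa only [BoundedBelow, mul_assoc, mul_inv_cancel_left] using h⟩

theorem exists_central_mul_mem_pos (u : G) :
    ∃ z ∈ S.pos, z ∈ Subgroup.center G ∧ z * u ∈ S.pos := by
  obtain ⟨n, hn, hc⟩ := S.central_power
  obtain ⟨p, hp⟩ := S.exists_boundedBelow u
  exact ⟨S.delta ^ (n * p), S.delta_pow_mem_pos _, pow_mul S.delta n p ▸ pow_mem hc p,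
    hp.mono (Nat.le_mul_of_pos_left p hn)⟩

variable {S}

theorem exists_simple_mul_of_le_delta_pow (hg : g ∈ S.pos) {n : ℕ}
    (hn : S.le g (S.delta ^ (n + 1))) :
    ∃ s ∈ S.Div S.delta, ∃ h ∈ S.Div (S.delta ^ n), g = s * h := by
  have hmeet : (S.meet g S.delta)⁻¹ * g = S.DL (g⁻¹ * S.delta) := by
    rw [← inv_inj, mul_inv_rev, inv_inv, S.mul_meet, inv_mul_cancel, DL, inv_inv]
  have hbound : S.BoundedBelow n (g⁻¹ * S.delta) := by
    rw [BoundedBelow, S.conj_delta, ← mul_assoc, ← mul_assoc, mul_inv_cancel_right, ← pow_succ']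
    exact S.boundedBelow_inv_iff_le.mpr hn
  refine ⟨S.meet g S.delta, ⟨meet_mem_pos hg S.delta_pos, S.meet_le_right _ _⟩,
    S.DL (g⁻¹ * S.delta), ⟨S.DL_mem_pos _, ?_⟩, by rw [← hmeet, mul_inv_cancel_left]⟩
  exact S.boundedBelow_inv_iff_le.mp hbound.inv_DL

theorem finite_Div_delta_pow (n : ℕ) : (S.Div (S.delta ^ n)).Finite := by
  induction n with
  | zero =>
    refine (Set.finite_singleton (1 : G)).subset fun g ⟨hg, hg1⟩ => ?_
    exact le.antisymm (pow_zero S.delta ▸ hg1) (S.one_le_iff.mpr hg)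
  | succ n ih =>
    refine (S.divDelta_finite.mul ih).subset fun g ⟨hg, hgn⟩ => ?_
    obtain ⟨s, hs, h, hh, rfl⟩ := exists_simple_mul_of_le_delta_pow hg hgn
    exact Set.mul_mem_mul hs hh

theorem finite_boundedBelow (p q : ℕ) :
    {g : G | S.BoundedBelow p g ∧ S.BoundedBelow q g⁻¹}.Finite := by
  refine ((finite_Div_delta_pow (p + q)).image fun g => (S.delta ^ p)⁻¹ * g).subset
    fun g ⟨hp, hq⟩ => ⟨S.delta ^ p * g, ⟨hp, ?_⟩, inv_mul_cancel_left _ _⟩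
  rw [pow_add, S.mul_le_mul_left_iff]
  exact S.boundedBelow_inv_iff_le.mp hq

end Delta

section Atoms

variable {G : Type*} [Group G] (S : GarsideStructure G) {g : G}

theorem atoms_subset_Div_delta : S.atoms ⊆ S.Div S.delta :=
  fun a ha => ⟨ha.1, S.atoms_divide_delta a ha.1 ha.2.1 ha.2.2⟩

theorem atoms_finite : S.atoms.Finite := S.divDelta_finite.subset S.atoms_subset_Div_delta

theorem closure_atoms : Submonoid.closure S.atoms = S.pos := S.atoms_generate

variable {S}

theorem pos_induction {P : (g : G) → g ∈ S.pos → Prop} (one : P 1 S.pos.one_mem)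
    (mul : ∀ a (ha : a ∈ S.atoms) g (hg : g ∈ S.pos), P g hg → P (a * g) (mul_mem ha.1 hg))
    (hg : g ∈ S.pos) : P g hg := by
  suffices ∃ h, P g h from this.2
  rw [← S.closure_atoms] at hg
  induction hg using Submonoid.closure_induction_left with
  | one => exact ⟨_, one⟩
  | mul_left a ha g _ ih => exact ⟨_, mul a ha g ih.1 ih.2⟩

theorem exists_atom_mul_of_ne_one (hg : g ∈ S.pos) (h1 : g ≠ 1) :
    ∃ a ∈ S.atoms, ∃ h ∈ S.pos, g = a * h := by
  induction hg using pos_induction with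
  | one => exact absurd rfl h1
  | mul a ha g hg _ => exact ⟨a, ha, g, hg, rfl⟩

end Atoms

section Length

variable {G : Type*} [Group G] (S : GarsideStructure G)

theorem exists_monoidHom_extending {A : Type*} [Group A] (f : S.pos →* A) :
    ∃ F : G →* A, ∀ a : S.pos, F a = f a := by
  choose z hz hzc hzu using S.exists_central_mul_mem_pos
  have hcomm (u : G) (a : S.pos) : Commute (f ⟨z u, hz u⟩) (f a) := by
    rw [Commute, SemiconjBy, ← map_mul, ← map_mul]
    exact congrArg f (Subtype.ext (Subgroup.mem_center_iff.mp (hzc u) a).symm)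
  let F (x : G) : A := (f ⟨z x, hz x⟩)⁻¹ * f ⟨z x * x, hzu x⟩
  have F_eq (x : G) (c d : S.pos) (hcd : (c : G) * x = d) : F x = (f c)⁻¹ * f d := by
    rw [inv_mul_eq_iff_eq_mul, ← mul_assoc, (hcomm x c).inv_right.eq, mul_assoc,
      eq_inv_mul_iff_mul_eq, ← map_mul, ← map_mul]
    refine congrArg f (Subtype.ext ?_)
    simp only [Submonoid.coe_mul, ← hcd, ← mul_assoc, Subgroup.mem_center_iff.mp (hzc x) c]
  have F_mul (x y : G) : F (x * y) = F x * F y := by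
    have hxy : z x * z y * (x * y) = z x * x * (z y * y) := by
      simp only [mul_assoc, mul_left_cancel_iff]
      rw [← mul_assoc, ← Subgroup.mem_center_iff.mp (hzc y) x, mul_assoc]
    have hF : Commute (f ⟨z y, hz y⟩)⁻¹ (F x) :=
      (((hcomm y _).inv_right).mul_right (hcomm y _)).inv_left
    rw [F_eq (x * y) (⟨z x, hz x⟩ * ⟨z y, hz y⟩) (⟨z x * x, hzu x⟩ * ⟨z y * y, hzu y⟩) hxy,
      map_mul, map_mul, mul_inv_rev, mul_assoc, ← mul_assoc _⁻¹ (f ⟨z x * x, hzu x⟩),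
      ← mul_assoc, hF.eq, mul_assoc]
  exact ⟨MonoidHom.mk' F F_mul, fun a => by
    simpa using F_eq a 1 a (by simp)⟩

/-- An additive length function on `G`, positive on the atoms. -/
structure IsLength (L : G → ℤ) : Prop where
  map_mul : ∀ x y, L (x * y) = L x + L y
  atom_pos : ∀ a ∈ S.atoms, 0 < L a

theorem exists_isLength (ℓ : G → ℕ) (hmul : ∀ a ∈ S.pos, ∀ b ∈ S.pos, ℓ (a * b) = ℓ a + ℓ b)
    (hatom : ∀ a ∈ S.atoms, 0 < ℓ a) : ∃ L, S.IsLength L := by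
  let f : S.pos →* Multiplicative ℤ :=
    MonoidHom.mk' (fun a => .ofAdd (ℓ a : ℤ)) fun a b => by
      simp [hmul a a.2 b b.2, ofAdd_add]
  obtain ⟨F, hF⟩ := S.exists_monoidHom_extending f
  refine ⟨fun x => (F x).toAdd, fun x y => by simp, fun a ha => ?_⟩
  simpa [hF ⟨a, ha.1⟩, f] using hatom a ha

namespace IsLength

variable {S} {L : G → ℤ} (hL : S.IsLength L) {a b g : G}
include hL

theorem map_one : L 1 = 0 := by simpa using hL.map_mul 1 1

theorem map_inv (x : G) : L x⁻¹ = -L x := by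
  have := hL.map_mul x x⁻¹
  rw [mul_inv_cancel, hL.map_one] at this
  omega

theorem map_pow (x : G) (n : ℕ) : L (x ^ n) = n * L x := by
  induction n with
  | zero => simp [hL.map_one]
  | succ n ih => rw [pow_succ, hL.map_mul, ih]; push_cast; ring

theorem map_conj (u x : G) : L (u⁻¹ * x * u) = L x := by
  rw [hL.map_mul, hL.map_mul, hL.map_inv]; ring

theorem nonneg (hg : g ∈ S.pos) : 0 ≤ L g := by
  induction hg using pos_induction with
  | one => exact hL.map_one.ge
  | mul a ha g _ ih => rw [hL.map_mul]; linarith [hL.atom_pos a ha]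

theorem pos_of_ne_one (hg : g ∈ S.pos) (h1 : g ≠ 1) : 0 < L g := by
  obtain ⟨a, ha, h, hh, rfl⟩ := exists_atom_mul_of_ne_one hg h1
  rw [hL.map_mul]
  linarith [hL.atom_pos a ha, hL.nonneg hh]

theorem mono (h : S.le a b) : L a ≤ L b := by
  have := hL.nonneg h
  rw [hL.map_mul, hL.map_inv] at this
  linarith

theorem eq_of_le (h : S.le a b) (hab : L b ≤ L a) : a = b := by
  by_contra hne
  have := hL.pos_of_ne_one h (by rwa [Ne, inv_mul_eq_one])
  rw [hL.map_mul, hL.map_inv] at this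
  linarith

theorem le_delta_pow (hg : g ∈ S.pos) {n : ℕ} (hn : L g ≤ n) : S.le g (S.delta ^ n) := by
  rw [← S.boundedBelow_inv_iff_le]
  induction hg using pos_induction generalizing n with
  | one => simpa using BoundedBelow.of_pos S.pos.one_mem
  | mul a ha g hg ih =>
    have ha0 := hL.atom_pos a ha
    have hg0 := hL.nonneg hg
    rw [hL.map_mul] at hn
    obtain ⟨m, rfl⟩ : ∃ m, n = m + 1 := ⟨n - 1, by omega⟩
    have haΔ : S.BoundedBelow 1 a⁻¹ := by
      simpa [S.boundedBelow_inv_iff_le] using (S.atoms_subset_Div_delta ha).2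
    rw [mul_inv_rev]
    exact (ih (by push_cast at hn; omega)).mul haΔ

end IsLength

end Length

section StandardParabolic

variable {G : Type*} [Group G] {S : GarsideStructure G} {X Y : Set G} {c g : G}

variable (S) in
theorem exists_isLUB_insert (c : G) (hX : X.Finite) :
    ∃ d, (∀ x ∈ insert c X, S.le x d) ∧ ∀ b, (∀ x ∈ insert c X, S.le x b) → S.le d b := by
  induction X, hX using Set.Finite.induction_on with
  | empty => exact ⟨c, by simp [le, S.pos.one_mem], by simp⟩
  | @insert a X _ _ ih =>
    obtain ⟨d, hd, hmin⟩ := ih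
    simp only [Set.insert_comm c a, Set.forall_mem_insert (s := insert c X)]
    exact ⟨S.join a d, ⟨S.le_join_left a d, fun x hx => (hd x hx).trans (S.le_join_right a d)⟩,
      fun b hb => S.join_le a d b hb.1 (hmin b hb.2)⟩

variable (S) in
theorem deltaOf_empty : S.deltaOf ∅ = 1 := by
  rw [deltaOf]
  split_ifs with h
  · have hd := h.choose_spec.2
    refine le.antisymm (hd 1 (by simp)) (S.one_le_iff.mpr ?_)
    simpa [le] using hd (h.choose * h.choose) (by simp)
  · rfl

theorem deltaOf_isLUB (hX : X ⊆ S.atoms) (hne : X.Nonempty) :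
    (∀ x ∈ X, S.le x (S.deltaOf X)) ∧ ∀ c, (∀ x ∈ X, S.le x c) → S.le (S.deltaOf X) c := by
  obtain ⟨a, ha⟩ := hne
  have h := S.exists_isLUB_insert a (S.atoms_finite.subset hX)
  rw [Set.insert_eq_of_mem ha] at h
  rw [deltaOf, dif_pos h]
  exact h.choose_spec

theorem le_deltaOf (hX : X ⊆ S.atoms) (hg : g ∈ X) : S.le g (S.deltaOf X) :=
  (deltaOf_isLUB hX ⟨g, hg⟩).1 g hg

theorem deltaOf_mem_pos (hX : X ⊆ S.atoms) : S.deltaOf X ∈ S.pos := by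
  rcases X.eq_empty_or_nonempty with rfl | ⟨a, ha⟩
  · exact S.deltaOf_empty ▸ S.pos.one_mem
  · exact S.one_le_iff.mp ((S.one_le_iff.mpr (hX ha).1).trans (le_deltaOf hX ha))

theorem deltaOf_le (hX : X ⊆ S.atoms) (hc : c ∈ S.pos) (h : ∀ x ∈ X, S.le x c) :
    S.le (S.deltaOf X) c := by
  rcases X.eq_empty_or_nonempty with rfl | hne
  · exact S.deltaOf_empty ▸ S.one_le_iff.mpr hc
  · exact (deltaOf_isLUB hX hne).2 c h

theorem closureOf_subset_atoms (X : Set G) : S.closureOf X ⊆ S.atoms := Set.inter_subset_right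

theorem subset_closureOf (hX : X ⊆ S.atoms) : X ⊆ S.closureOf X :=
  fun _ hx => ⟨⟨(hX hx).1, le_deltaOf hX hx⟩, hX hx⟩

theorem closureOf_subset_closureOf (hX : X ⊆ S.atoms) (hY : Y ⊆ S.atoms)
    (h : X ⊆ S.closureOf Y) : S.closureOf X ⊆ S.closureOf Y :=
  fun _ hx => ⟨⟨hx.1.1, hx.1.2.trans
    (deltaOf_le hX (deltaOf_mem_pos hY) fun _ hy => (h hy).1.2)⟩, hx.2⟩

theorem closureOf_closureOf (hX : X ⊆ S.atoms) :
    S.closureOf (S.closureOf X) = S.closureOf X :=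
  (closureOf_subset_closureOf (closureOf_subset_atoms X) hX subset_rfl).antisymm
    (subset_closureOf (closureOf_subset_atoms X))

theorem GX_closureOf (hX : X ⊆ S.atoms) : S.GX (S.closureOf X) = S.GX X := by
  rw [GX, closureOf_closureOf hX, GX]

theorem GX_le_GX (hX : X ⊆ S.atoms) (hY : Y ⊆ S.atoms) (h : X ⊆ S.closureOf Y) :
    S.GX X ≤ S.GX Y :=
  Subgroup.closure_mono (closureOf_subset_closureOf hX hY h)

variable (S) in
theorem GX_empty : S.GX ∅ = ⊥ := by
  rw [GX, Subgroup.closure_eq_bot_iff, closureOf, deltaOf_empty]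
  exact fun a ha => le.antisymm ha.1.2 (S.one_le_iff.mpr ha.1.1)

variable (S) in
theorem isParabolic_iff {H : Subgroup G} :
    S.IsParabolic H ↔ ∃ X ⊆ S.atoms, ∃ c : G, H = MulAut.conj c • S.GX X := by
  constructor
  · rintro ⟨_, c, ⟨X, hX, -, rfl⟩, rfl⟩
    exact ⟨X, hX, c, rfl⟩
  · rintro ⟨X, hX, c, rfl⟩
    exact ⟨_, c, ⟨_, closureOf_subset_atoms X, closureOf_closureOf hX, rfl⟩, by
      rw [GX_closureOf hX]; rfl⟩

theorem mem_conj_smul_iff {H : Subgroup G} : g ∈ MulAut.conj c • H ↔ c⁻¹ * g * c ∈ H := by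
  rw [Subgroup.mem_pointwise_smul_iff_inv_smul_mem, ← map_inv, MulAut.smul_def,
    MulAut.conj_apply, inv_inv]

theorem conj_smul_mono {H K : Subgroup G} (h : H ≤ K) : MulAut.conj c • H ≤ MulAut.conj c • K :=
  Subgroup.pointwise_smul_le_pointwise_smul_iff.mpr h

namespace IsLCM

variable (hS : S.IsLCM) (hX : X ⊆ S.atoms)
include hS hX

theorem deltaOf_mem_Div_delta_inter :
    S.deltaOf X ∈ S.Div S.delta ∩ {g | g ∈ S.GX X ∧ g ∈ S.pos} :=
  hS.div_eq X hX ▸ ⟨deltaOf_mem_pos hX, by simp [le]⟩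

theorem deltaOf_mem_GX : S.deltaOf X ∈ S.GX X := (hS.deltaOf_mem_Div_delta_inter hX).2.1

theorem mem_closureOf_iff {a : G} (ha : a ∈ S.atoms) : a ∈ S.closureOf X ↔ a ∈ S.GX X := by
  refine ⟨fun h => Subgroup.subset_closure h, fun h => ⟨?_, ha⟩⟩
  rw [hS.div_eq X hX]
  exact ⟨S.atoms_subset_Div_delta ha, h, ha.1⟩

theorem mem_closureOf_of_prod_mem {l : List G} (hl : ∀ a ∈ l, a ∈ S.atoms)
    (hprod : l.prod ∈ S.GX X) : ∀ a ∈ l, a ∈ S.closureOf X := by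
  induction l with
  | nil => simp
  | cons b l ih =>
    rw [List.forall_mem_cons] at hl ⊢
    rw [List.prod_cons] at hprod
    have hlpos : l.prod ∈ S.pos := S.pos.list_prod_mem fun a ha => (hl.2 a ha).1
    obtain ⟨hbX, hlX⟩ :=
      hS.factor_closed X hX _ hprod (mul_mem hl.1.1 hlpos) b _ hl.1.1 hlpos rfl
    exact ⟨(hS.mem_closureOf_iff hX hl.1).mpr hbX, ih hl.2 hlX⟩

theorem pos_inf_GX_eq_closure :
    S.pos ⊓ (S.GX X).toSubmonoid = Submonoid.closure (S.closureOf X) := by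
  refine le_antisymm (fun g ⟨hg, hgX⟩ => ?_) (Submonoid.closure_le.mpr fun a ha =>
    ⟨ha.1.1, Subgroup.subset_closure ha⟩)
  rw [← S.closure_atoms] at hg
  obtain ⟨l, hl, rfl⟩ := Submonoid.exists_list_of_mem_closure hg
  exact Submonoid.list_prod_mem _ fun a ha =>
    Submonoid.subset_closure (hS.mem_closureOf_of_prod_mem hX hl hgX a ha)

theorem conj_deltaOf_mem_pos_iff (hg : g ∈ S.GX X) :
    S.deltaOf X * g * (S.deltaOf X)⁻¹ ∈ S.pos ↔ g ∈ S.pos := by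
  have hΔ := hS.deltaOf_mem_GX hX
  have hconj : Submonoid.closure (S.closureOf X) ≤
      S.pos.comap (MulAut.conj (S.deltaOf X)).toMonoidHom := by
    refine Submonoid.closure_le.mpr fun a ha => ?_
    have ha' := (hS.balanced X hX a ha.1.1).mp ha.1.2
    simpa [mul_assoc] using (hS.balanced X hX _ ha').mp (by simpa [le] using ha.1.1)
  have hinv : Submonoid.closure (S.closureOf X) ≤
      S.pos.comap (MulAut.conj (S.deltaOf X)⁻¹).toMonoidHom := by
    refine Submonoid.closure_le.mpr fun a ha => ?_
    simpa [le, mul_assoc] using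
      (hS.balanced X hX _ ha.1.2).mpr (by simpa using ha.1.1)
  rw [← hS.pos_inf_GX_eq_closure hX] at hconj hinv
  refine ⟨fun h => ?_, fun h => hconj ⟨h, hg⟩⟩
  have hgX : S.deltaOf X * g * (S.deltaOf X)⁻¹ ∈ S.GX X := mul_mem (mul_mem hΔ hg) (inv_mem hΔ)
  simpa [mul_assoc] using hinv ⟨h, hgX⟩

theorem conj_deltaOf_pow_mem_pos_iff (hg : g ∈ S.GX X) (n : ℕ) :
    S.deltaOf X ^ n * g * (S.deltaOf X ^ n)⁻¹ ∈ S.pos ↔ g ∈ S.pos := by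
  induction n with
  | zero => simp
  | succ n ih =>
    have hΔ := pow_mem (hS.deltaOf_mem_GX hX) n
    rw [← ih, ← hS.conj_deltaOf_mem_pos_iff hX (mul_mem (mul_mem hΔ hg) (inv_mem hΔ)), pow_succ']
    simp [mul_assoc]

theorem deltaOf_pow_mul_inv_mem_pos (hg : g ∈ S.pos) (hgX : g ∈ S.GX X) {n : ℕ}
    (hn : S.le g (S.delta ^ n)) : S.deltaOf X ^ n * g⁻¹ ∈ S.pos := by
  induction n generalizing g with
  | zero => simpa [le] using hn
  | succ n ih =>
    obtain ⟨s, hs, h, hh, rfl⟩ := exists_simple_mul_of_le_delta_pow hg hn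
    obtain ⟨hsX, hhX⟩ := hS.factor_closed X hX _ hgX hg s h hs.1 hh.1 rfl
    have hsΔ : S.le s (S.deltaOf X) :=
      ((hS.div_eq X hX).symm ▸ ⟨hs, hsX, hs.1⟩ : s ∈ S.Div (S.deltaOf X)).2
    have hΔ := hS.deltaOf_mem_GX hX
    have htail := (hS.conj_deltaOf_mem_pos_iff hX (mul_mem (pow_mem hΔ n) (inv_mem hhX))).mpr
      (ih hh.1 hhX hh.2)
    rw [pow_succ']
    simpa [mul_assoc] using mul_mem htail ((hS.balanced X hX s hs.1).mp hsΔ)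

theorem deltaOf_pow_mul_mem_pos {n : ℕ} (hg : g ∈ S.GX X) (hn : S.BoundedBelow n g) :
    S.deltaOf X ^ n * g ∈ S.pos := by
  have hDL := hS.deltaOf_pow_mul_inv_mem_pos hX (S.DL_mem_pos g) (hS.fraction_closed X hX g hg).1
    (S.boundedBelow_inv_iff_le.mp hn.inv_DL)
  simpa [NL, mul_assoc] using mul_mem hDL (S.NL_mem_pos g)

/-- An element `g` of `G_X` with `g ≼ Δ ^ n` is `Δ_X ^ n * h⁻¹` with `h` positive; if `h` has
length at most `n`, then `h` in turn divides `Δ_X ^ n`. -/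
theorem mem_pos_of_length_le {L : G → ℤ} (hL : S.IsLength L) {n : ℕ} (hg : g ∈ S.GX X)
    (hn : S.BoundedBelow n g⁻¹) (hLn : n * L (S.deltaOf X) - L g ≤ n) : g ∈ S.pos := by
  have hh := hS.deltaOf_pow_mul_mem_pos hX (inv_mem hg) hn
  have hhX := mul_mem (pow_mem (hS.deltaOf_mem_GX hX) n) (inv_mem hg)
  have hhΔ := hL.le_delta_pow hh (n := n) (by rwa [hL.map_mul, hL.map_pow, hL.map_inv])
  rw [← hS.conj_deltaOf_pow_mem_pos_iff hX hg n]
  simpa [mul_assoc] using hS.deltaOf_pow_mul_inv_mem_pos hX hh hhX hhΔ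

end IsLCM

end StandardParabolic

section Support

variable {G : Type*} [Group G] {S : GarsideStructure G} {X : Set G} {c g h : G}

theorem exists_atom_list (hg : g ∈ S.pos) : ∃ l : List G, (∀ a ∈ l, a ∈ S.atoms) ∧ l.prod = g :=
  Submonoid.exists_list_of_mem_closure (S.closure_atoms ▸ hg)

theorem eq_nil_of_prod_eq_one {l : List G} (hl : ∀ a ∈ l, a ∈ S.atoms) (h1 : l.prod = 1) :
    l = [] := by
  rcases l with - | ⟨a, l⟩
  · rfl
  · rw [List.forall_mem_cons] at hl
    have hl' : l.prod ∈ S.pos := S.pos.list_prod_mem fun b hb => (hl.2 b hb).1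
    rw [List.prod_cons, mul_eq_one_iff_inv_eq] at h1
    exact absurd (S.units_triv a hl.1.1 (h1 ▸ hl')) hl.1.2.1

theorem exists_atom_list_supp_eq (hg : g ∈ S.pos) :
    ∃ l : List G, (∀ a ∈ l, a ∈ S.atoms) ∧ l.prod = g ∧ S.supp g = S.closureOf {a | a ∈ l} := by
  have hex : ∃ p : List G × List G, (∀ a ∈ p.1, a ∈ S.atoms) ∧ (∀ a ∈ p.2, a ∈ S.atoms) ∧
      p.1.prod = S.DL g ∧ p.2.prod = S.NL g := by
    obtain ⟨l, hl, rfl⟩ := exists_atom_list hg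
    exact ⟨([], l), by simp, hl, by simp [DL_eq_one_iff.mpr hg], by simp [NL_of_pos hg]⟩
  obtain ⟨hl₁, hl₂, hp₁, hp₂⟩ := hex.choose_spec
  have hnil := eq_nil_of_prod_eq_one hl₁ (hp₁.trans (DL_eq_one_iff.mpr hg))
  refine ⟨hex.choose.2, hl₂, hp₂.trans (NL_of_pos hg), ?_⟩
  rw [supp, dif_pos hex, hnil]
  simp

theorem supp_subset_atoms (hg : g ∈ S.pos) : S.supp g ⊆ S.atoms := by
  obtain ⟨l, -, -, hsupp⟩ := exists_atom_list_supp_eq hg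
  exact hsupp ▸ closureOf_subset_atoms _

theorem mem_GX_supp (hg : g ∈ S.pos) : g ∈ S.GX (S.supp g) := by
  obtain ⟨l, hl, rfl, hsupp⟩ := exists_atom_list_supp_eq hg
  rw [hsupp, GX_closureOf (X := {a | a ∈ l}) hl]
  exact Subgroup.list_prod_mem _ fun a ha => Subgroup.subset_closure (subset_closureOf hl ha)

theorem IsLCM.GX_supp_le (hS : S.IsLCM) (hX : X ⊆ S.atoms) (hg : g ∈ S.pos)
    (hgX : g ∈ S.GX X) : S.GX (S.supp g) ≤ S.GX X := by
  obtain ⟨l, hl, rfl, hsupp⟩ := exists_atom_list_supp_eq hg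
  rw [hsupp, GX_closureOf (X := {a | a ∈ l}) hl]
  exact GX_le_GX hl hX (hS.mem_closureOf_of_prod_mem hX hl hgX)

theorem SupportPreserving.conj_smul_GX_supp (hsp : S.SupportPreserving) (hg : g ∈ S.pos)
    (hh : h ∈ S.pos) (hc : SemiconjBy c g h) :
    MulAut.conj c • S.GX (S.supp g) = S.GX (S.supp h) := by
  have : MulAut.conj c⁻¹ • S.GX (S.supp h) = S.GX (S.supp g) :=
    hsp h hh g hg c (by rw [mul_assoc, ← hc.eq, inv_mul_cancel_left])
  rw [← this, map_inv, smul_inv_smul]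

end Support

section Swap

variable {G : Type*} [Group G] {S : GarsideStructure G} {X : Set G} {u x y : G} {m n p : ℕ}

variable (S) in
/-- The product of the successive denominators conjugating `x` to its `n`-th iterated swap. -/
def swapConj (x : G) : ℕ → G
  | 0 => 1
  | n + 1 => S.DL (S.swap^[n] x) * swapConj x n

variable (S) in
theorem iterate_swap_eq_conj (x : G) (n : ℕ) :
    S.swap^[n] x = S.swapConj x n * x * (S.swapConj x n)⁻¹ := by
  induction n with
  | zero => simp [swapConj]
  | succ n ih =>
    rw [Function.iterate_succ_apply', swap, swapConj, mul_inv_rev]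
    nth_rewrite 2 [ih]
    simp only [mul_assoc]

variable (S) in
theorem semiconjBy_swapConj (x : G) (n : ℕ) : SemiconjBy (S.swapConj x n) x (S.swap^[n] x) := by
  rw [S.iterate_swap_eq_conj, SemiconjBy, inv_mul_cancel_right]

variable (S) in
theorem swapConj_mem_pos (x : G) (n : ℕ) : S.swapConj x n ∈ S.pos := by
  induction n with
  | zero => exact S.pos.one_mem
  | succ n ih => exact S.pos.mul_mem (S.DL_mem_pos _) ih

variable (S) in
theorem swapConj_add (x : G) (m n : ℕ) :
    S.swapConj x (m + n) = S.swapConj (S.swap^[n] x) m * S.swapConj x n := by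
  induction m with
  | zero => simp [swapConj]
  | succ m ih =>
    rw [Nat.succ_add, swapConj, ih, swapConj, ← Function.iterate_add_apply, mul_assoc]

theorem swapConj_mul_of_isPeriodicPt (hx : Function.IsPeriodicPt S.swap m x) (k : ℕ) :
    S.swapConj x (k * m) = S.swapConj x m ^ k := by
  induction k with
  | zero => simp [swapConj]
  | succ k ih => rw [Nat.succ_mul, swapConj_add, hx.eq, ih, pow_succ]

variable (S) in
theorem swapConj_mul_mem_pos (x : G) (hn : 0 < n) : S.swapConj x n * x ∈ S.pos := by
  obtain ⟨n, rfl⟩ := Nat.exists_eq_add_of_le' hn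
  have hNL : S.swapConj x 1 * x = S.NL x := by simp [swapConj, NL]
  rw [swapConj_add, mul_assoc, hNL]
  exact S.pos.mul_mem (S.swapConj_mem_pos _ _) (S.NL_mem_pos x)

theorem BoundedBelow.inv_swapConj (hx : S.BoundedBelow p x) (n : ℕ) :
    S.BoundedBelow (n * p) (S.swapConj x n)⁻¹ := by
  induction n with
  | zero => simp [BoundedBelow, swapConj, S.pos.one_mem]
  | succ n ih =>
    rw [swapConj, mul_inv_rev, Nat.succ_mul]
    exact ih.mul (hx.iterate_swap n).inv_DL

namespace IsLCM

variable (hS : S.IsLCM) (hX : X ⊆ S.atoms) (hx : x ∈ S.GX X)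
include hS hX hx

theorem iterate_swap_mem_GX (n : ℕ) : S.swap^[n] x ∈ S.GX X := by
  refine Function.Iterate.rec (· ∈ S.GX X) hx (fun y hy => ?_) n
  have hfrac := hS.fraction_closed X hX y hy
  exact mul_mem hfrac.2 (inv_mem hfrac.1)

theorem swapConj_mem_GX (n : ℕ) : S.swapConj x n ∈ S.GX X := by
  induction n with
  | zero => exact one_mem _
  | succ n ih =>
    exact mul_mem (hS.fraction_closed X hX _ (hS.iterate_swap_mem_GX hX hx n)).1 ih

end IsLCM

variable (S) in
theorem exists_recurrent_iterate_swap (x : G) : ∃ n, S.Recurrent (S.swap^[n] x) := by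
  obtain ⟨p, hp⟩ := S.exists_boundedBelow x
  obtain ⟨q, hq⟩ := S.exists_boundedBelow x⁻¹
  obtain ⟨m, n, hmn, heq⟩ := (finite_boundedBelow p q).exists_lt_map_eq_of_forall_mem
    (f := fun n => S.swap^[n] x) fun n => And.intro (hp.iterate_swap n) (hq.inv_iterate_swap n)
  refine ⟨m, n - m, Nat.sub_pos_of_lt hmn, ?_⟩
  rw [← Function.iterate_add_apply, Nat.sub_add_cancel hmn.le]
  exact heq.symm

theorem transport_eq (h : SemiconjBy u y x) : S.transport x u = S.DL x * u * (S.DL y)⁻¹ := by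
  have hNL : S.NL x * u = S.DL x * u * y := by rw [NL, mul_assoc, ← h.eq, mul_assoc]
  rw [transport, hNL, show (S.DL y)⁻¹ = S.meet 1 y from inv_inv _, S.mul_meet, mul_one]

theorem transport_mem_pos (hu : u ∈ S.pos) (x : G) : S.transport x u ∈ S.pos :=
  meet_mem_pos (mul_mem (S.DL_mem_pos x) hu) (mul_mem (S.NL_mem_pos x) hu)

theorem swapConj_mul_mul_inv_mem_pos (hu : u ∈ S.pos) (h : SemiconjBy u y x) (n : ℕ) :
    S.swapConj x n * u * (S.swapConj y n)⁻¹ ∈ S.pos := by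
  induction n with
  | zero => simpa [swapConj] using hu
  | succ n ih =>
    have hn := ((S.semiconjBy_swapConj x n).mul_left h).mul_left
      (S.semiconjBy_swapConj y n).inv_symm_left
    have := transport_eq hn ▸ transport_mem_pos ih _
    simpa [swapConj, mul_assoc] using this

theorem exists_boundedBelow_swapConj_mul_mul_inv (h : SemiconjBy u y x) :
    ∃ p, ∀ n, S.BoundedBelow p (S.swapConj x n * u * (S.swapConj y n)⁻¹) := by
  obtain ⟨z, -, hz, hzu⟩ := S.exists_central_mul_mem_pos u
  obtain ⟨p, hp⟩ := S.exists_boundedBelow z⁻¹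
  have hzx (g : G) : SemiconjBy z g g := (Subgroup.mem_center_iff.mp hz g).symm
  refine ⟨p, fun n => ?_⟩
  have := hp.mul_pos (swapConj_mul_mul_inv_mem_pos hzu ((hzx x).mul_left h) n)
  rwa [← mul_assoc, ← mul_assoc, ← mul_assoc, ((hzx (S.swapConj x n)).inv_symm_left).eq,
    inv_mul_cancel_right] at this

theorem exists_pow_semiconjBy_of_finite {G : Type*} [Group G] {a b u : G} {A : Set G}
    (hA : A.Finite) (h : ∀ n : ℕ, a ^ n * u * (b ^ n)⁻¹ ∈ A) :
    ∃ d : ℕ, 0 < d ∧ SemiconjBy u (b ^ d) (a ^ d) := by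
  obtain ⟨i, j, hij, heq⟩ := hA.exists_lt_map_eq_of_forall_mem h
  obtain ⟨d, rfl⟩ := Nat.exists_eq_add_of_le hij.le
  refine ⟨d, by omega, ?_⟩
  have hu : u = a ^ d * (u * (b ^ d)⁻¹) := by
    simpa [pow_add, mul_assoc, mul_inv_eq_iff_eq_mul] using heq
  rwa [← mul_assoc, eq_mul_inv_iff_mul_eq] at hu

theorem Recurrent.exists_semiconjBy_swapConj (hx : S.Recurrent x) (hy : S.Recurrent y)
    (h : SemiconjBy u y x) :
    ∃ n, 0 < n ∧ SemiconjBy u (S.swapConj y n) (S.swapConj x n) := by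
  obtain ⟨p, hp⟩ := exists_boundedBelow_swapConj_mul_mul_inv h
  obtain ⟨q, hq⟩ := exists_boundedBelow_swapConj_mul_mul_inv h.inv_symm_left
  obtain ⟨m₁, hm₁, hx₁⟩ := hx
  obtain ⟨m₂, hm₂, hy₂⟩ := hy
  have hxm : Function.IsPeriodicPt S.swap (m₁ * m₂) x := Function.IsPeriodicPt.mul_const hx₁ m₂
  have hym : Function.IsPeriodicPt S.swap (m₁ * m₂) y := Function.IsPeriodicPt.const_mul hy₂ m₁
  obtain ⟨d, hd, hsemi⟩ := exists_pow_semiconjBy_of_finite (u := u)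
    (a := S.swapConj x (m₁ * m₂)) (b := S.swapConj y (m₁ * m₂)) (finite_boundedBelow (S := S) p q)
    fun n => by
      rw [← swapConj_mul_of_isPeriodicPt hxm, ← swapConj_mul_of_isPeriodicPt hym]
      exact ⟨hp _, by simpa [mul_assoc] using hq (n * (m₁ * m₂))⟩
  rw [← swapConj_mul_of_isPeriodicPt hxm, ← swapConj_mul_of_isPeriodicPt hym] at hsemi
  exact ⟨d * (m₁ * m₂), by positivity, hsemi⟩

end Swap

section SwapPositive

variable {G : Type*} [Group G] {S : GarsideStructure G} {g x y b : G}

theorem eq_one_of_meet_delta_eq_one (hg : g ∈ S.pos) (h : S.meet g S.delta = 1) : g = 1 := by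
  by_contra h1
  obtain ⟨a, ha, b, hb, rfl⟩ := exists_atom_mul_of_ne_one hg h1
  have := S.le_meet (a * b) S.delta a (by simpa using hb) (S.atoms_subset_Div_delta ha).2
  rw [h, mul_one] at this
  exact ha.2.1 (S.units_triv a ha.1 this)

variable (S) in
/-- The map `g ↦ g ∧ y * g`; the swaps of `x` are computed by iterating it, with `y` positive
and conjugate to `x`, on an element conjugating `x` to `y`. -/
def meetTranslate (y g : G) : G := S.meet g (y * g)

theorem meetTranslate_le (y g : G) : S.le (S.meetTranslate y g) g := S.meet_le_left _ _

theorem iterate_meetTranslate_conj (b x : G) (n : ℕ) :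
    (S.meetTranslate (b * x * b⁻¹))^[n] b = b * (S.swapConj x n)⁻¹ := by
  induction n with
  | zero => simp [swapConj]
  | succ n ih =>
    have hmul : b * x * b⁻¹ * (b * (S.swapConj x n)⁻¹) =
        b * (S.swapConj x n)⁻¹ * S.swap^[n] x := by
      rw [S.iterate_swap_eq_conj]; group
    rw [Function.iterate_succ_apply', ih, meetTranslate, hmul, swapConj, mul_inv_rev, ← mul_assoc,
      DL, inv_inv, S.mul_meet, mul_one]

section

variable (hy : y ∈ S.pos)
include hy

theorem isFixedPt_meetTranslate_one : Function.IsFixedPt (S.meetTranslate y) 1 := by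
  exact le.antisymm (meetTranslate_le y 1)
    (S.le_meet _ _ _ (by simp [S.pos.one_mem]) (by simpa using hy))

theorem meetTranslate_mem_pos (hg : g ∈ S.pos) : S.meetTranslate y g ∈ S.pos :=
  meet_mem_pos hg (mul_mem hy hg)

theorem commute_meetTranslate_meet_delta :
    Function.Commute (S.meetTranslate y) (S.meet · S.delta) := by
  have hyΔ : S.le S.delta (y * S.delta) := by
    rw [le, S.conj_delta]
    simpa [mul_assoc] using hy
  intro g
  apply le.antisymm (S := S)
  · have hle : S.le (S.meetTranslate y (S.meet g S.delta)) (S.meet g S.delta) :=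
      meetTranslate_le _ _
    have hle' : S.le (S.meetTranslate y (S.meet g S.delta)) (y * S.meet g S.delta) :=
      S.meet_le_right _ _
    rw [S.mul_meet] at hle'
    exact S.le_meet _ _ _
      (S.le_meet _ _ _ (hle.trans (S.meet_le_left _ _)) (hle'.trans (S.meet_le_left _ _)))
      (hle.trans (S.meet_le_right _ _))
  · have hle : S.le (S.meet (S.meetTranslate y g) S.delta) (S.meetTranslate y g) :=
      S.meet_le_left _ _
    have hle' : S.le (S.meet (S.meetTranslate y g) S.delta) S.delta := S.meet_le_right _ _
    refine S.le_meet _ _ _ (S.le_meet _ _ _ (hle.trans (meetTranslate_le y g)) hle') ?_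
    rw [S.mul_meet]
    exact S.le_meet _ _ _ (hle.trans (S.meet_le_right _ _)) (hle'.trans hyΔ)

theorem isFixedPt_iterate_meetTranslate {L : G → ℤ} (hL : S.IsLength L) (hg : g ∈ S.pos) {n : ℕ}
    (hn : L g ≤ n) : Function.IsFixedPt (S.meetTranslate y) ((S.meetTranslate y)^[n] g) := by
  induction n generalizing g with
  | zero =>
    have : 1 = g := hL.eq_of_le (S.one_le_iff.mpr hg) (by simpa [hL.map_one] using hn)
    exact this ▸ isFixedPt_meetTranslate_one hy
  | succ n ih =>
    by_cases hfix : Function.IsFixedPt (S.meetTranslate y) g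
    · rwa [(hfix.iterate _).eq]
    · have hlt : L (S.meetTranslate y g) < L g :=
        not_le.mp fun hle => hfix (hL.eq_of_le (meetTranslate_le y g) hle)
      exact ih (meetTranslate_mem_pos hy hg) (by push_cast at hn; omega)

end

namespace IsLength

variable {L : G → ℤ} (hL : S.IsLength L)
include hL

theorem exists_iterate_swap_mem_pos (hx : b * x * b⁻¹ ∈ S.pos) : ∃ n, S.swap^[n] x ∈ S.pos := by
  obtain ⟨z, -, hz, hzb⟩ := S.exists_central_mul_mem_pos b
  have hx' : z * b * x * (z * b)⁻¹ ∈ S.pos := by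
    rw [show z * b * x * (z * b)⁻¹ = z * (b * x * b⁻¹) * z⁻¹ by group,
      ← Subgroup.mem_center_iff.mp hz, mul_inv_cancel_right]
    exact hx
  refine ⟨(L (z * b)).toNat, ?_⟩
  have hfix := isFixedPt_iterate_meetTranslate hx' hL hzb (Int.self_le_toNat _)
  rw [iterate_meetTranslate_conj] at hfix
  set c := S.swapConj x (L (z * b)).toNat with hc
  have hle : S.le (z * b * c⁻¹) (z * b * x * (z * b)⁻¹ * (z * b * c⁻¹)) := by
    conv_lhs => rw [← hfix.eq]
    exact S.meet_le_right _ _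
  rw [S.iterate_swap_eq_conj, ← hc]
  simpa [le, mul_assoc] using hle

theorem iterate_swap_mem_pos (hx : b * x * b⁻¹ ∈ S.pos) {n : ℕ} (hn : L S.delta ≤ n) :
    S.swap^[n] x ∈ S.pos := by
  obtain ⟨k, hk⟩ := hL.exists_iterate_swap_mem_pos hx
  have hy := S.iterate_swap_eq_conj x k ▸ hk
  set c := S.swapConj x k with hc
  set φ := S.meetTranslate (c * x * c⁻¹)
  have hφ1 : Function.IsFixedPt φ 1 := isFixedPt_meetTranslate_one hy
  have hhead (i : ℕ) : φ^[i] (S.meet c S.delta) = S.meet (c * (S.swapConj x i)⁻¹) S.delta := by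
    rw [((commute_meetTranslate_meet_delta hy).iterate_left i).eq, iterate_meetTranslate_conj]
  have hfix : Function.IsFixedPt φ (φ^[n] (S.meet c S.delta)) :=
    isFixedPt_iterate_meetTranslate hy hL
      (meet_mem_pos (S.swapConj_mem_pos x k) S.delta_pos)
      ((hL.mono (S.meet_le_right _ _)).trans hn)
  have hone : φ^[n] (S.meet c S.delta) = 1 := by
    rw [← (hfix.iterate k).eq, ← Function.iterate_add_apply, add_comm,
      Function.iterate_add_apply, hhead k, ← hc, mul_inv_cancel,
      inv_eq_one.mp (DL_eq_one_iff.mpr S.delta_pos), (hφ1.iterate n).eq]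
  have hcn : c * (S.swapConj x n)⁻¹ = 1 := by
    refine eq_one_of_meet_delta_eq_one ?_ (hhead n ▸ hone)
    rw [← iterate_meetTranslate_conj]
    exact Function.Iterate.rec (· ∈ S.pos) (S.swapConj_mem_pos x k)
      (fun _ => meetTranslate_mem_pos hy) n
  rwa [S.iterate_swap_eq_conj, ← mul_inv_eq_one.mp hcn]

end IsLength

end SwapPositive

section Intersection

variable {G : Type*} [Group G] {S : GarsideStructure G} {X Y Z U V X₁ X₂ : Set G} {B : Subgroup G}
  {L : G → ℤ} {c u w x y z α θ : G} {p : ℕ}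

variable (S) in
/-- A subgroup `B` such that every `x` in `B` lies in a parabolic subgroup `θ G_Y θ⁻¹`
contained in `B`. The conjugator `θ` may depend on `x`, but we ask that passing from `x` to
`θ⁻¹ x θ` costs a bounded number `q` of factors `Δ` in the upper bound by powers of `Δ`. -/
def IsLocallyParabolic (B : Subgroup G) : Prop :=
  ∃ q, ∀ x ∈ B, ∀ p, S.BoundedBelow p x⁻¹ → ∃ Y ⊆ S.atoms, ∃ θ,
    x ∈ MulAut.conj θ • S.GX Y ∧ MulAut.conj θ • S.GX Y ≤ B ∧
      S.BoundedBelow (p + q) (θ⁻¹ * x * θ)⁻¹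

theorem exists_maximal_conj_smul_GX_le (B : Subgroup G) (L : G → ℤ) :
    ∃ Z ⊆ S.atoms, ∃ θ : G, MulAut.conj θ • S.GX Z ≤ B ∧ ∀ Y ⊆ S.atoms, ∀ η : G,
      MulAut.conj η • S.GX Y ≤ B → L (S.deltaOf Y) ≤ L (S.deltaOf Z) := by
  have hfin : {Y | Y ⊆ S.atoms ∧ ∃ η : G, MulAut.conj η • S.GX Y ≤ B}.Finite :=
    S.atoms_finite.finite_subsets.subset fun Y hY => hY.1
  obtain ⟨Z, ⟨hZ, θ, hθ⟩, hmax⟩ := Set.exists_max_image _ (fun Y => L (S.deltaOf Y)) hfin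
    ⟨∅, Set.empty_subset _, 1, by simp [GX_empty]⟩
  exact ⟨Z, hZ, θ, hθ, fun Y hY η hη => hmax Y ⟨hY, η, hη⟩⟩

theorem boundedBelow_inv_conj (c : G) :
    ∃ q, ∀ x p, S.BoundedBelow p x⁻¹ → S.BoundedBelow (p + q) (c⁻¹ * x * c)⁻¹ := by
  obtain ⟨q₁, hq₁⟩ := S.exists_boundedBelow c⁻¹
  obtain ⟨q₂, hq₂⟩ := S.exists_boundedBelow c
  refine ⟨q₁ + q₂, fun x p hp => ?_⟩
  convert (hq₁.mul hp).mul hq₂ using 1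
  · ring
  · group

theorem IsLocallyParabolic.conj_smul (hB : S.IsLocallyParabolic B) (c : G) :
    S.IsLocallyParabolic (MulAut.conj c • B) := by
  obtain ⟨q, hq⟩ := hB
  obtain ⟨r, hr⟩ := boundedBelow_inv_conj (S := S) c
  refine ⟨r + q, fun x hx p hp => ?_⟩
  obtain ⟨Y, hY, θ, hxY, hle, hθ⟩ := hq _ (mem_conj_smul_iff.mp hx) _ (hr x p hp)
  refine ⟨Y, hY, c * θ, ?_, ?_, ?_⟩
  · rw [map_mul, mul_smul]
    exact mem_conj_smul_iff.mpr hxY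
  · rw [map_mul, mul_smul]
    exact conj_smul_mono hle
  · simpa [mul_assoc, add_assoc] using hθ

section

variable (hS : S.IsLCM)
include hS

theorem exists_recurrent_conj (hX : X ⊆ S.atoms) (hx : x ∈ MulAut.conj c • S.GX X) :
    ∃ θ, MulAut.conj θ • S.GX X = MulAut.conj c • S.GX X ∧ S.Recurrent (θ⁻¹ * x * θ) ∧
      ∀ p, S.BoundedBelow p (c⁻¹ * x * c)⁻¹ → S.BoundedBelow p (θ⁻¹ * x * θ)⁻¹ := by
  rw [mem_conj_smul_iff] at hx
  obtain ⟨n, hn⟩ := S.exists_recurrent_iterate_swap (c⁻¹ * x * c)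
  have hmem := hS.swapConj_mem_GX hX hx n
  have hconj (d : G) : (c * d⁻¹)⁻¹ * x * (c * d⁻¹) = d * (c⁻¹ * x * c) * d⁻¹ := by group
  refine ⟨c * (S.swapConj (c⁻¹ * x * c) n)⁻¹, ?_, ?_, fun p hp => ?_⟩
  · rw [map_mul, mul_smul, Subgroup.conj_smul_eq_self_of_mem (inv_mem hmem)]
  · rwa [hconj, ← S.iterate_swap_eq_conj]
  · rw [hconj, ← S.iterate_swap_eq_conj]
    exact hp.inv_iterate_swap n

/-- With `D = swapConj y n` intertwined by `u`, the positive elements `D` and `D * y` are carried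
by `u` to their analogues for `z`, so the support of `D * (D * y)` is controlled on both sides. -/
theorem Recurrent.exists_GX_le_inf (hsp : S.SupportPreserving) (hy : S.Recurrent y)
    (hz : S.Recurrent z) (hu : SemiconjBy u z y) (hX₁ : X₁ ⊆ S.atoms) (hX₂ : X₂ ⊆ S.atoms)
    (hyX : y ∈ S.GX X₁) (hzX : z ∈ S.GX X₂) :
    ∃ Y ⊆ S.atoms, y ∈ S.GX Y ∧ S.GX Y ≤ S.GX X₁ ∧ S.GX Y ≤ MulAut.conj u • S.GX X₂ := by
  obtain ⟨n, hn, hD⟩ := hy.exists_semiconjBy_swapConj hz hu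
  have hDy := S.swapConj_mem_pos y n
  have hDy' := S.swapConj_mul_mem_pos y hn
  have hE := mul_mem hDy hDy'
  have hF := mul_mem (S.swapConj_mem_pos z n) (S.swapConj_mul_mem_pos z hn)
  have hDX₁ := hS.swapConj_mem_GX hX₁ hyX n
  have hDX₂ := hS.swapConj_mem_GX hX₂ hzX n
  have hsupp := supp_subset_atoms hE
  obtain ⟨hD₁, hD₂⟩ := hS.factor_closed _ hsupp _ (mem_GX_supp hE) hE _ _ hDy hDy' rfl
  refine ⟨_, hsupp, (Subgroup.mul_mem_cancel_left _ hD₁).mp hD₂,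
    hS.GX_supp_le hX₁ hE (mul_mem hDX₁ (mul_mem hDX₁ hyX)), ?_⟩
  rw [← hsp.conj_smul_GX_supp hF hE (hD.mul_right (hD.mul_right hu))]
  exact conj_smul_mono (hS.GX_supp_le hX₂ hF (mul_mem hDX₂ (mul_mem hDX₂ hzX)))

theorem isLocallyParabolic_inf (hsp : S.SupportPreserving) {B₁ B₂ : Subgroup G}
    (h₁ : S.IsParabolic B₁) (h₂ : S.IsParabolic B₂) : S.IsLocallyParabolic (B₁ ⊓ B₂) := by
  obtain ⟨X₁, hX₁, c₁, rfl⟩ := S.isParabolic_iff.mp h₁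
  obtain ⟨X₂, hX₂, c₂, rfl⟩ := S.isParabolic_iff.mp h₂
  obtain ⟨q, hq⟩ := boundedBelow_inv_conj (S := S) c₁
  refine ⟨q, fun x ⟨hx₁, hx₂⟩ p hp => ?_⟩
  obtain ⟨θ₁, hθ₁, hr₁, hb⟩ := exists_recurrent_conj hS hX₁ hx₁
  obtain ⟨θ₂, hθ₂, hr₂, -⟩ := exists_recurrent_conj hS hX₂ hx₂
  have hu : SemiconjBy (θ₁⁻¹ * θ₂) (θ₂⁻¹ * x * θ₂) (θ₁⁻¹ * x * θ₁) := by
    rw [SemiconjBy]; group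
  obtain ⟨Y, hY, hyY, hle₁, hle₂⟩ := hr₁.exists_GX_le_inf hS hsp hr₂ hu hX₁ hX₂
    (mem_conj_smul_iff.mp (hθ₁.symm ▸ hx₁)) (mem_conj_smul_iff.mp (hθ₂.symm ▸ hx₂))
  refine ⟨Y, hY, θ₁, mem_conj_smul_iff.mpr hyY, le_inf ?_ ?_, hb _ (hq x p hp)⟩
  · exact hθ₁ ▸ conj_smul_mono hle₁
  · have := conj_smul_mono (c := θ₁) hle₂
    rwa [smul_smul, ← map_mul, mul_inv_cancel_left, hθ₂] at this

variable (hL : S.IsLength L)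
include hL

theorem length_deltaOf_le_of_conj_pow_mem (hZ : Z ⊆ S.atoms) (hV : V ⊆ S.atoms) {j : ℕ}
    (hj : 0 < j) (hmem : α⁻¹ * S.deltaOf Z ^ j * α ∈ S.GX V) :
    L (S.deltaOf Z) ≤ L (S.deltaOf V) := by
  obtain ⟨q, hq⟩ := boundedBelow_inv_conj (S := S) α
  have hΔ : S.BoundedBelow 1 (S.deltaOf Z)⁻¹ := by
    simpa [S.boundedBelow_inv_iff_le] using (hS.deltaOf_mem_Div_delta_inter hZ).1.2
  have hgrowth (n : ℕ) :
      (j * n : ℤ) * L (S.deltaOf Z) ≤ (j * n + q : ℤ) * L (S.deltaOf V) := by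
    have hpow : α⁻¹ * S.deltaOf Z ^ (j * n) * α = (α⁻¹ * S.deltaOf Z ^ j * α) ^ n := by
      simpa [pow_mul] using (conj_pow (i := n) (a := α⁻¹) (b := S.deltaOf Z ^ j)).symm
    have hbound : S.BoundedBelow (j * n + q) (α⁻¹ * S.deltaOf Z ^ (j * n) * α)⁻¹ :=
      hq _ _ (by simpa using hΔ.pow (j * n))
    have := hL.nonneg (hS.deltaOf_pow_mul_mem_pos hV
      (inv_mem (hpow ▸ pow_mem hmem n)) hbound)
    rw [hL.map_mul, hL.map_inv, hL.map_conj, hL.map_pow, hL.map_pow] at this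
    push_cast at this
    linarith
  by_contra! hlt
  obtain ⟨n, hn⟩ : ∃ n : ℕ, q * L (S.deltaOf V) < n :=
    ⟨_, Int.lt_add_one_of_le (Int.self_le_toNat (q * L (S.deltaOf V)))⟩
  have hjn : (n : ℤ) ≤ j * n := le_mul_of_one_le_left (by positivity) (mod_cast hj)
  have hmul := mul_le_mul_of_nonneg_left (Int.add_one_le_of_lt hlt)
    (by positivity : 0 ≤ (j * n : ℤ))
  linarith [hgrowth n]

theorem GX_eq_of_le_of_length_le (hV : V ⊆ S.atoms) (hU : U ⊆ S.atoms) (hle : S.GX V ≤ S.GX U)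
    (hlen : L (S.deltaOf U) ≤ L (S.deltaOf V)) : S.GX V = S.GX U := by
  obtain ⟨hΔ, hmem, hpos⟩ := hS.deltaOf_mem_Div_delta_inter hV
  have hdvd : S.deltaOf V ∈ S.Div (S.deltaOf U) := hS.div_eq U hU ▸ ⟨hΔ, hle hmem, hpos⟩
  rw [GX, GX, closureOf, closureOf, hL.eq_of_le hdvd.2 hlen]

variable (hsp : S.SupportPreserving)
include hsp

theorem conj_smul_GX_le_of_conj_pow_mem (hZ : Z ⊆ S.atoms) (hU : U ⊆ S.atoms) {j : ℕ}
    (hj : 0 < j) (hmem : α⁻¹ * S.deltaOf Z ^ j * α ∈ S.GX U)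
    (hlen : L (S.deltaOf U) ≤ L (S.deltaOf Z)) : MulAut.conj α • S.GX U ≤ S.GX Z := by
  have hΔ : S.deltaOf Z ^ j ∈ S.pos := pow_mem (deltaOf_mem_pos hZ) j
  set x := α⁻¹ * S.deltaOf Z ^ j * α with hx
  set n := (L S.delta).toNat
  set v := S.swap^[n] x with hvdef
  set γ := S.swapConj x n
  have hγ : γ ∈ S.GX U := hS.swapConj_mem_GX hU hmem n
  have hv : v ∈ S.pos :=
    hL.iterate_swap_mem_pos (b := α) (by simpa [hx, mul_assoc] using hΔ) (Int.self_le_toNat _)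
  have hvconj : v = (α * γ⁻¹)⁻¹ * S.deltaOf Z ^ j * (α * γ⁻¹) := by
    simp [hvdef, S.iterate_swap_eq_conj, hx, γ, mul_assoc]
  have hlen' : L (S.deltaOf Z) ≤ L (S.deltaOf (S.supp v)) :=
    length_deltaOf_le_of_conj_pow_mem hS hL hZ (supp_subset_atoms hv) hj
      (α := α * γ⁻¹) (by rw [← hvconj]; exact mem_GX_supp hv)
  have hGX : S.GX (S.supp v) = S.GX U :=
    GX_eq_of_le_of_length_le hS hL (supp_subset_atoms hv) hU
      (hS.GX_supp_le hU hv (hS.iterate_swap_mem_GX hU hmem n)) (hlen.trans hlen')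
  have hconj : MulAut.conj α • S.GX U = S.GX (S.supp (S.deltaOf Z ^ j)) := by
    rw [← hsp.conj_smul_GX_supp hv hΔ (c := α * γ⁻¹) (by rw [SemiconjBy, hvconj]; group), hGX,
      map_mul, mul_smul, Subgroup.conj_smul_eq_self_of_mem (inv_mem hγ)]
  exact hconj ▸ hS.GX_supp_le hZ hΔ (pow_mem (hS.deltaOf_mem_GX hZ) j)

theorem exists_bounded_conj (hx : S.BoundedBelow p x) (hY : Y ⊆ S.atoms)
    (hxY : x ∈ MulAut.conj θ • S.GX Y) (hpos : θ⁻¹ * x * θ ∈ S.pos) :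
    ∃ U ⊆ S.atoms, ∃ α, S.BoundedBelow ((L S.delta).toNat * p) α ∧ S.BoundedBelow 0 α⁻¹ ∧
      x ∈ MulAut.conj α • S.GX U ∧ MulAut.conj α • S.GX U ≤ MulAut.conj θ • S.GX Y := by
  set n := (L S.delta).toNat
  have hsemi := S.semiconjBy_swapConj x n
  have hu : S.swap^[n] x ∈ S.pos :=
    hL.iterate_swap_mem_pos (b := θ⁻¹) (by simpa using hpos) (Int.self_le_toNat _)
  refine ⟨S.supp (S.swap^[n] x), supp_subset_atoms hu, (S.swapConj x n)⁻¹, hx.inv_swapConj n,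
    by simpa [S.boundedBelow_zero_iff] using S.swapConj_mem_pos x n, ?_, ?_⟩
  · rw [mem_conj_smul_iff, inv_inv, ← S.iterate_swap_eq_conj]
    exact mem_GX_supp hu
  · have hθ : SemiconjBy (S.swapConj x n * θ) (θ⁻¹ * x * θ) (S.swap^[n] x) :=
      hsemi.mul_left (by rw [SemiconjBy]; group)
    rw [← hsp.conj_smul_GX_supp hpos hu hθ, map_mul, map_inv, mul_smul, inv_smul_smul]
    exact conj_smul_mono (hS.GX_supp_le hY hpos (mem_conj_smul_iff.mp hxY))

end

namespace IsLocallyParabolic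

variable (hB : S.IsLocallyParabolic B) (hS : S.IsLCM) (hL : S.IsLength L)
include hB hS hL

variable (hZ : Z ⊆ S.atoms) (hZB : S.GX Z ≤ B)
  (hmax : ∀ Y ⊆ S.atoms, ∀ θ : G, MulAut.conj θ • S.GX Y ≤ B → L (S.deltaOf Y) ≤ L (S.deltaOf Z))
include hZ hZB hmax

/-- The length of `w * Δ_Z ^ m` is at least that of `Δ_Y ^ m` up to a constant, so that
`mem_pos_of_length_le` applies in `G_Y` for large `m`. -/
theorem exists_conj_mul_pow_mem_pos (hw : w ∈ B) :
    ∃ C, ∀ m ≥ C, ∃ Y ⊆ S.atoms, ∃ θ, w * S.deltaOf Z ^ m ∈ MulAut.conj θ • S.GX Y ∧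
      MulAut.conj θ • S.GX Y ≤ B ∧ θ⁻¹ * (w * S.deltaOf Z ^ m) * θ ∈ S.pos := by
  obtain ⟨q, hq⟩ := hB
  obtain ⟨r, hr⟩ := S.exists_boundedBelow w⁻¹
  have hΔ : S.BoundedBelow 1 (S.deltaOf Z)⁻¹ := by
    simpa [S.boundedBelow_inv_iff_le] using (hS.deltaOf_mem_Div_delta_inter hZ).1.2
  refine ⟨((r + q : ℤ) * L (S.deltaOf Z) - L w).toNat, fun m hm => ?_⟩
  have hbound : S.BoundedBelow (m + r) (w * S.deltaOf Z ^ m)⁻¹ := by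
    simpa using (hΔ.pow m).mul hr
  obtain ⟨Y, hY, θ, hxY, hle, hθ⟩ :=
    hq _ (mul_mem hw (hZB (pow_mem (hS.deltaOf_mem_GX hZ) m))) _ hbound
  refine ⟨Y, hY, θ, hxY, hle,
    hS.mem_pos_of_length_le hY hL (mem_conj_smul_iff.mp hxY) hθ ?_⟩
  rw [hL.map_conj, hL.map_mul, hL.map_pow]
  have hlen := mul_le_mul_of_nonneg_left (hmax Y hY θ hle) (Nat.cast_nonneg (m + r + q))
  have hm' := Int.toNat_le.mp hm
  push_cast at hlen ⊢
  linarith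

theorem le_GX (hsp : S.SupportPreserving) : B ≤ S.GX Z := by
  intro w hw
  obtain ⟨C, hC⟩ := hB.exists_conj_mul_pow_mem_pos hS hL hZ hZB hmax hw
  obtain ⟨p, hp⟩ := S.exists_boundedBelow w
  have hconj (k : ℕ) : ∃ (U : Set G) (α : G), U ⊆ S.atoms ∧
      (S.BoundedBelow ((L S.delta).toNat * p) α ∧ S.BoundedBelow 0 α⁻¹) ∧
      w * S.deltaOf Z ^ (C + k) ∈ MulAut.conj α • S.GX U ∧ MulAut.conj α • S.GX U ≤ B := by
    obtain ⟨Y, hY, θ, hxY, hle, hpos⟩ := hC (C + k) (Nat.le_add_right C k)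
    obtain ⟨U, hU, α, hα, hα', hxU, hle'⟩ := exists_bounded_conj hS hL hsp
      (hp.mul_pos (pow_mem (deltaOf_mem_pos hZ) _)) hY hxY hpos
    exact ⟨U, α, hU, ⟨hα, hα'⟩, hxU, hle'.trans hle⟩
  choose U α hU hα hmem hle using hconj
  have hfin := S.atoms_finite.finite_subsets.prod
    (finite_boundedBelow (S := S) ((L S.delta).toNat * p) 0)
  obtain ⟨m, n, hmn, heq⟩ := hfin.exists_lt_map_eq_of_forall_mem
    (f := fun k => (U k, α k)) fun k => Set.mk_mem_prod (hU k) (hα k)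
  obtain ⟨hUeq, hαeq⟩ := Prod.mk.inj heq
  have hpow : S.deltaOf Z ^ (n - m) ∈ MulAut.conj (α m) • S.GX (U m) := by
    have hquot := mul_mem (inv_mem (hmem m)) (hUeq ▸ hαeq ▸ hmem n)
    rwa [show C + n = C + m + (n - m) by omega, pow_add _ (C + m), ← mul_assoc w,
      inv_mul_cancel_left] at hquot
  have hUZ := conj_smul_GX_le_of_conj_pow_mem hS hL hsp hZ (hU m) (Nat.sub_pos_of_lt hmn)
    (mem_conj_smul_iff.mp hpow) (hmax _ (hU m) _ (hle m))
  exact (Subgroup.mul_mem_cancel_right _ (pow_mem (hS.deltaOf_mem_GX hZ) _)).mp (hUZ (hmem m))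

omit hZ hZB hmax in
protected theorem isParabolic (hsp : S.SupportPreserving) : S.IsParabolic B := by
  obtain ⟨Z, hZ, θ, hθ, hmax⟩ := exists_maximal_conj_smul_GX_le B L
  refine S.isParabolic_iff.mpr ⟨Z, hZ, θ, le_antisymm ?_ hθ⟩
  rw [Subgroup.subset_pointwise_smul_iff, ← map_inv]
  refine (hB.conj_smul θ⁻¹).le_GX hS hL hZ ?_ (fun Y hY η hη => hmax Y hY (θ * η) ?_) hsp
  · rwa [map_inv, ← Subgroup.pointwise_smul_subset_iff]
  · rwa [map_mul, mul_smul, Subgroup.pointwise_smul_subset_iff, ← map_inv]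

end IsLocallyParabolic

end Intersection

end GarsideStructure

theorem garside_intersection_of_parabolics_general {G : Type*} [Group G]
    (S : GarsideStructure G) (hLCM : S.IsLCM) (hsp : S.SupportPreserving)
    (hhom : ∃ ℓ : G → ℕ,
      (∀ a ∈ S.pos, ∀ b ∈ S.pos, ℓ (a * b) = ℓ a + ℓ b) ∧ ∀ a ∈ S.atoms, 0 < ℓ a)
    (B₁ B₂ : Subgroup G) (h₁ : S.IsParabolic B₁) (h₂ : S.IsParabolic B₂) :
    S.IsParabolic (B₁ ⊓ B₂) := by
  obtain ⟨ℓ, hmul, hatom⟩ := hhom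
  obtain ⟨L, hL⟩ := S.exists_isLength ℓ hmul hatom
  exact (GarsideStructure.isLocallyParabolic_inf hLCM hsp h₁ h₂).isParabolic hLCM hL hsp

/-- under homogeneity, square-freeness and centrality of some positive
power of each `Δ_X` in `G_X`, the intersection of two parabolic subgroups of a
support-preserving LCM-Garside structure is a parabolic subgroup. -/
theorem garside_intersection_of_parabolics {G : Type*} [Group G]
    (S : GarsideStructure G) (hLCM : S.IsLCM) (hsp : S.SupportPreserving)
    (hhom : ∃ ℓ : G → ℕ,
      (∀ a ∈ S.pos, ∀ b ∈ S.pos, ℓ (a * b) = ℓ a + ℓ b) ∧ ∀ a ∈ S.atoms, ℓ a = 1)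
    (hsf : ∀ s ∈ S.Div S.delta, ∀ u ∈ S.pos, ∀ v ∈ S.pos, ∀ a ∈ S.atoms,
      s ≠ u * a * a * v)
    (hcent : ∀ X : Set G, X ⊆ S.atoms → S.closureOf X = X →
      ∃ e : ℕ, 0 < e ∧ ∀ g ∈ S.GX X, Commute g (S.deltaOf X ^ e))
    (B₁ B₂ : Subgroup G) (h₁ : S.IsParabolic B₁) (h₂ : S.IsParabolic B₂) :
    S.IsParabolic (B₁ ⊓ B₂) := by
  obtain ⟨ℓ, hmul, hatom⟩ := hhom
  exact garside_intersection_of_parabolics_general S hLCM hsp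
    ⟨ℓ, hmul, fun a ha => (hatom a ha).symm ▸ Nat.one_pos⟩ B₁ B₂ h₁ h₂
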